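/- For every nonnegative integer ℓ, nonnegative integer n, and complex number x such that no denominator vanishes: sum over k from 0 to n of ((3x)_k (2-ℓ-3x)_k (-n)_k)/(k! (3/2-ℓ)_k (-1-3n)_k) * (3/4)^k equals ((3x-1)_ℓ (3x-1/2)_ℓ)/((6x-1)_ℓ (-1/2)_ℓ) * sum over i from 0 to ℓ of ((3x+i-1)/(3x-1))^2 * ((-ℓ)_i (6x-2)_i)/(i! (6x+ℓ-1)_i) * (((2+i)/3 + x)_n ((4-i)/3 - x)_n)/((2/3)_n (4/3)_n). (A variant generalization of Gosper's second identity.) -/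

import Mathlib

/-- Pochhammer symbol (rising factorial) `(a)_k`. -/
noncomputable def poch (a : ℂ) (k : ℕ) : ℂ := ∏ j ∈ Finset.range k, (a + j)

/-!
Put `a = 3 * x - 1`. Up to a factor independent of `k`, the quotient
`(1 + a)_k (1 - ℓ - a)_k / (3/2 - ℓ)_k` is the divided difference of
`y ^ 2 ↦ y * (1 + y)_k (1 - y)_k / (3/2)_k` at the nodes `a ^ 2, (a + 1) ^ 2, …, (a + ℓ) ^ 2`:
both sides satisfy the recursion of divided differences in `ℓ`. Written out as a combination of
values at the nodes, this turns the left-hand side into a combination of the sums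
`∑ k, (1 + y)_k (1 - y)_k (-n)_k / (k! (3/2)_k (-1 - 3 n)_k) * (3/4) ^ k` with `y = a + i`.
Gosper's second identity evaluates each of them: by creative telescoping the sum satisfies a
first-order recurrence in `n`.
-/

theorem poch_zero (a : ℂ) : poch a 0 = 1 := by simp [poch]

theorem poch_succ (a : ℂ) (k : ℕ) : poch a (k + 1) = poch a k * (a + k) :=
  Finset.prod_range_succ _ _

theorem poch_add (a : ℂ) (m k : ℕ) : poch a (m + k) = poch a m * poch (a + m) k := by
  simp [poch, Finset.prod_range_add, add_assoc]

theorem poch_succ_left (a : ℂ) (k : ℕ) : poch a (k + 1) = a * poch (a + 1) k := by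
  rw [add_comm, poch_add]
  simp [poch]

theorem mul_poch_add_one (a : ℂ) (k : ℕ) : a * poch (a + 1) k = poch a k * (a + k) := by
  rw [← poch_succ_left, poch_succ]

theorem poch_one_sub (a : ℂ) (k : ℕ) : poch (1 - a) k = (-1) ^ k * poch (a - k) k := by
  induction k with
  | zero => simp [poch_zero]
  | succ k ih =>
    rw [poch_succ, ih, poch_succ_left]
    push_cast
    rw [show a - (k + 1) + 1 = a - k by ring]
    ring

theorem poch_one_sub_mul_poch (a : ℂ) (m k : ℕ) :
    poch (1 - a) m * poch a k = poch (1 - a - k) m * poch (a - m) k := by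
  have hsplit : poch (a - m) m * poch a k = poch (a - m) k * poch (a + k - m) m := by
    have h := poch_add (a - m) k m
    rw [add_comm k, poch_add, sub_add_cancel] at h
    rw [h, sub_add_eq_add_sub]
  rw [sub_sub, poch_one_sub, poch_one_sub, mul_assoc, hsplit]
  ring

theorem poch_two_mul (a : ℂ) (m : ℕ) :
    poch (2 * a) (2 * m) = 4 ^ m * (poch a m * poch (a + 1 / 2) m) := by
  induction m with
  | zero => simp [poch_zero]
  | succ m ih =>
    rw [mul_add_one, poch_succ, poch_succ, ih, poch_succ, poch_succ]
    push_cast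
    ring

theorem poch_ne_zero_iff {a : ℂ} {k : ℕ} : poch a k ≠ 0 ↔ ∀ j < k, a + j ≠ 0 := by
  simp [poch, Finset.prod_ne_zero_iff]

theorem poch_add_natCast_ne_zero {a : ℂ} {i k m : ℕ} (ha : poch a m ≠ 0) (hik : i + k ≤ m) :
    poch (a + i) k ≠ 0 := by
  rw [← Nat.add_sub_cancel' hik, poch_add, poch_add] at ha
  exact right_ne_zero_of_mul (left_ne_zero_of_mul ha)

theorem poch_neg_natCast_ne_zero {m k : ℕ} (hkm : k ≤ m) : poch (-(m : ℂ)) k ≠ 0 := by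
  refine poch_ne_zero_iff.mpr fun j hj => ?_
  rw [neg_add_eq_sub, sub_ne_zero]
  exact_mod_cast (hj.trans_le hkm).ne

theorem poch_ne_zero_of_two_mul_eq_odd {a : ℂ} {m : ℤ} (hm : Odd m) (ha : 2 * a = m) (k : ℕ) :
    poch a k ≠ 0 := by
  refine poch_ne_zero_iff.mpr fun j _ hj => ?_
  have hcast : (m + 2 * j : ℂ) = 0 := by linear_combination 2 * hj - ha
  have hmj : m + 2 * j = 0 := by exact_mod_cast hcast
  have := hm.add_even (even_two_mul (j : ℤ))
  simp [hmj] at this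

theorem poch_three_halves_ne_zero (k : ℕ) : poch (3 / 2) k ≠ 0 :=
  poch_ne_zero_of_two_mul_eq_odd (m := 3) (by decide) (by norm_num) k

/-- The `k`-th term of the hypergeometric series `₃F₂(1 + y, 1 - y, b; 3 / 2, d; 3 / 4)`. -/
noncomputable def gosperTerm (y b d : ℂ) (k : ℕ) : ℂ :=
  poch b k / (k.factorial * poch d k) * (3 / 4) ^ k *
    (poch (1 + y) k * poch (1 - y) k / poch (3 / 2) k)

theorem mul_gosperTerm_add_one_left (y b d : ℂ) (k : ℕ) :
    b * gosperTerm y (b + 1) d k = (b + k) * gosperTerm y b d k := by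
  simp only [gosperTerm]
  linear_combination (3 / 4) ^ k * poch (1 + y) k * poch (1 - y) k /
    (k.factorial * poch d k * poch (3 / 2) k) * mul_poch_add_one b k

theorem mul_gosperTerm_add_one_right (y b : ℂ) {d : ℂ} {k : ℕ} (hd : poch d (k + 1) ≠ 0) :
    (d + k) * gosperTerm y b (d + 1) k = d * gosperTerm y b d k := by
  have hd_right : poch d k ≠ 0 := left_ne_zero_of_mul (poch_succ d k ▸ hd)
  have hd_left : poch (d + 1) k ≠ 0 := right_ne_zero_of_mul (poch_succ_left d k ▸ hd)
  have hratio : (d + k) / poch (d + 1) k = d / poch d k := by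
    rw [div_eq_div_iff hd_left hd_right, mul_poch_add_one, mul_comm]
  simp only [gosperTerm]
  linear_combination poch b k / k.factorial * (3 / 4) ^ k *
    (poch (1 + y) k * poch (1 - y) k / poch (3 / 2) k) * hratio

theorem mul_gosperTerm_add_three_right (y b : ℂ) {d : ℂ} {k : ℕ} (hd : poch d (k + 3) ≠ 0) :
    (d + k) * (d + 1 + k) * (d + 2 + k) * gosperTerm y b (d + 3) k =
      d * (d + 1) * (d + 2) * gosperTerm y b d k := by
  have h0 := mul_gosperTerm_add_one_right y b (d := d + (0 : ℕ))
    (poch_add_natCast_ne_zero hd (k := k + 1) (by omega))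
  have h1 := mul_gosperTerm_add_one_right y b (d := d + (1 : ℕ))
    (poch_add_natCast_ne_zero hd (k := k + 1) (by omega))
  have h2 := mul_gosperTerm_add_one_right y b (d := d + (2 : ℕ))
    (poch_add_natCast_ne_zero hd (k := k + 1) (by omega))
  push_cast at h0 h1 h2
  rw [add_zero] at h0
  rw [add_assoc d 1 1, one_add_one_eq_two] at h1
  rw [add_assoc d 2 1, two_add_one_eq_three] at h2
  linear_combination (d + k) * (d + 1 + k) * h2 + (d + k) * (d + 2) * h1 + (d + 1) * (d + 2) * h0

theorem gosperTerm_succ (y b : ℂ) {d : ℂ} {k : ℕ} (hd : d + k ≠ 0) :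
    4 * ((k + 1) * (k + 3 / 2) * (d + k)) * gosperTerm y b d (k + 1) =
      3 * (((k + 1) ^ 2 - y ^ 2) * (b + k)) * gosperTerm y b d k := by
  have hk : (k + 1 : ℂ) ≠ 0 := Nat.cast_add_one_ne_zero k
  have hk' : (3 / 2 + k : ℂ) ≠ 0 :=
    poch_ne_zero_iff.mp (poch_three_halves_ne_zero (k + 1)) k k.lt_succ_self
  have hratio : gosperTerm y b d (k + 1) = gosperTerm y b d k *
      (3 / 4 * ((1 + y + k) * (1 - y + k) * (b + k)) / ((k + 1) * (3 / 2 + k) * (d + k))) := by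
    simp only [gosperTerm, poch_succ, Nat.factorial_succ, Nat.cast_mul, Nat.cast_add_one,
      div_eq_mul_inv, mul_inv]
    ring
  rw [hratio, add_comm (k : ℂ) (3 / 2), mul_div_assoc', mul_div_assoc',
    div_eq_iff (mul_ne_zero (mul_ne_zero hk hk') hd)]
  ring

section Recurrence

variable (n : ℕ) (y : ℂ)

theorem succ_mul_gosperTerm (k : ℕ) :
    (n + 1) * gosperTerm y (-n) (-1 - 3 * n) k =
      (n + 1 - k) * gosperTerm y (-n - 1) (-1 - 3 * n) k := by
  have h := mul_gosperTerm_add_one_left y (-n - 1) (-1 - 3 * n) k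
  rw [sub_add_cancel] at h
  linear_combination -h

theorem mul_gosperTerm_succ {k : ℕ} (hk : k ≤ 3 * n + 1) :
    (3 * n + 2) * (3 * n + 3) * (3 * n + 4) * gosperTerm y (-n - 1) (-4 - 3 * n) k =
      (3 * n + 2 - k) * (3 * n + 3 - k) * (3 * n + 4 - k) *
        gosperTerm y (-n - 1) (-1 - 3 * n) k := by
  have hd := poch_neg_natCast_ne_zero (show k + 3 ≤ 3 * n + 4 by omega)
  rw [show -((3 * n + 4 : ℕ) : ℂ) = -4 - 3 * n by push_cast; ring] at hd
  have h := mul_gosperTerm_add_three_right y (-n - 1) hd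
  rw [show (-4 - 3 * n + 3 : ℂ) = -1 - 3 * n by ring] at h
  linear_combination h

/-- The certificate found by Zeilberger's algorithm: its difference in `k` is the combination of
terms of orders `n` and `n + 1` whose sum is the recurrence in `n`. It is a polynomial multiple of
the mixed term `gosperTerm y (-n - 1) (-1 - 3 * n) k` because the terms of both orders are. -/
noncomputable def gosperCertificate (k : ℕ) : ℂ :=
  4 / 3 * k * (k + 1 / 2) * (k - 2 - 3 * n) * gosperTerm y (-n - 1) (-1 - 3 * n) k

theorem gosperCertificate_succ_sub {k : ℕ} (hk : k ≤ 3 * n) :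
    gosperCertificate n y (k + 1) - gosperCertificate n y k =
      (n + 1) * ((3 * n + 2) * (3 * n + 4) * gosperTerm y (-n - 1) (-4 - 3 * n) k -
        ((3 * n + 3) ^ 2 - y ^ 2) * gosperTerm y (-n) (-1 - 3 * n) k) := by
  have hd : (-1 - 3 * n + k : ℂ) ≠ 0 := by
    have := poch_ne_zero_iff.mp (poch_neg_natCast_ne_zero (le_refl (3 * n + 1))) k (by omega)
    push_cast at this
    rwa [neg_add_rev] at this
  have hk_succ := gosperTerm_succ y (-n - 1) hd
  have hlow := succ_mul_gosperTerm n y k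
  have hhigh := mul_gosperTerm_succ n y (k := k) (by omega)
  simp only [gosperCertificate]
  push_cast
  linear_combination hk_succ / 3 - hhigh / 3 + ((3 * n + 3) ^ 2 - y ^ 2) * hlow

theorem sum_gosperTerm_succ :
    (3 * n + 2) * (3 * n + 4) *
        ∑ k ∈ Finset.range (n + 2), gosperTerm y (-n - 1) (-4 - 3 * n) k =
      ((3 * n + 3) ^ 2 - y ^ 2) *
        ∑ k ∈ Finset.range (n + 1), gosperTerm y (-n) (-1 - 3 * n) k := by
  have htel := Finset.sum_range_sub (gosperCertificate n y) (n + 1)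
  rw [Finset.sum_congr rfl fun k hk => gosperCertificate_succ_sub n y
      (by have := Finset.mem_range.mp hk; omega),
    ← Finset.mul_sum, Finset.sum_sub_distrib, ← Finset.mul_sum, ← Finset.mul_sum] at htel
  have hlast := mul_gosperTerm_succ n y (k := n + 1) (by omega)
  rw [← mul_right_inj' (Nat.cast_add_one_ne_zero n), Finset.sum_range_succ _ (n + 1)]
  simp only [gosperCertificate] at htel
  push_cast at htel hlast
  linear_combination htel + hlast / 3

theorem sum_gosperTerm :
    ∑ k ∈ Finset.range (n + 1), gosperTerm y (-n) (-1 - 3 * n) k =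
      poch (1 + y / 3) n * poch (1 - y / 3) n / (poch (2 / 3) n * poch (4 / 3) n) := by
  induction n with
  | zero => simp [gosperTerm, poch_zero]
  | succ n ih =>
    have h2 : (3 * n + 2 : ℂ) ≠ 0 := by exact_mod_cast (3 * n + 1).succ_ne_zero
    have h4 : (3 * n + 4 : ℂ) ≠ 0 := by exact_mod_cast (3 * n + 3).succ_ne_zero
    have hratio : (1 + y / 3 + n) * (1 - y / 3 + n) / ((2 / 3 + n) * (4 / 3 + n)) =
        ((3 * n + 3) ^ 2 - y ^ 2) / ((3 * n + 2) * (3 * n + 4)) := by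
      rw [show (2 / 3 + n : ℂ) = (3 * n + 2) / 3 by ring,
        show (4 / 3 + n : ℂ) = (3 * n + 4) / 3 by ring]
      field_simp
      ring
    simp only [poch_succ]
    rw [mul_mul_mul_comm, mul_mul_mul_comm (poch (2 / 3) n), mul_div_mul_comm, ← ih, hratio,
      mul_div_assoc', eq_div_iff (mul_ne_zero h2 h4), mul_comm _ (_ - _),
      ← sum_gosperTerm_succ, mul_comm]
    push_cast
    rw [neg_add', show (-1 - 3 * (n + 1) : ℂ) = -4 - 3 * n by ring]

end Recurrence

/-- Coefficient of `2 * (a + i) * φ (a + i)` in `sqDividedDiff φ ℓ a`. -/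
noncomputable def sqDividedDiffCoeff (ℓ : ℕ) (a : ℂ) (i : ℕ) : ℂ :=
  poch (-ℓ) i / (i.factorial * poch (2 * a + i) (ℓ + 1))

/-- `(-1) ^ ℓ * ℓ!` times the divided difference of the values `φ (a + i)` at the nodes
`(a + i) ^ 2`, for `0 ≤ i ≤ ℓ`. -/
noncomputable def sqDividedDiff (φ : ℂ → ℂ) (ℓ : ℕ) (a : ℂ) : ℂ :=
  ∑ i ∈ Finset.range (ℓ + 1), sqDividedDiffCoeff ℓ a i * (2 * (a + i) * φ (a + i))

theorem sqDividedDiffCoeff_eq_zero {ℓ i : ℕ} (a : ℂ) (hi : ℓ < i) :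
    sqDividedDiffCoeff ℓ a i = 0 := by
  have hpoch : poch (-ℓ) i = 0 :=
    not_not.mp fun h => poch_ne_zero_iff.mp h ℓ hi (neg_add_cancel _)
  rw [sqDividedDiffCoeff, hpoch, zero_div]

theorem sqDividedDiffCoeff_succ_zero {ℓ : ℕ} {a : ℂ} (ha : 2 * a + (ℓ + 1) ≠ 0) :
    (2 * a + (ℓ + 1)) * sqDividedDiffCoeff (ℓ + 1) a 0 = sqDividedDiffCoeff ℓ a 0 := by
  simp only [sqDividedDiffCoeff, poch_zero, poch_succ _ (ℓ + 1)]
  push_cast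
  rw [add_zero]
  field_simp

theorem sqDividedDiffCoeff_succ_succ {ℓ i : ℕ} {a : ℂ}
    (ha : poch (2 * a + (i + 1 : ℕ)) (ℓ + 2) ≠ 0) :
    (2 * a + (ℓ + 1)) * sqDividedDiffCoeff (ℓ + 1) a (i + 1) =
      sqDividedDiffCoeff ℓ a (i + 1) - sqDividedDiffCoeff ℓ (a + 1) i := by
  have hnode : 2 * (a + 1) + i = 2 * a + (i + 1 : ℕ) + 1 := by push_cast; ring
  have hleft : poch (-((ℓ + 1 : ℕ) : ℂ)) (i + 1) = -(ℓ + 1) * poch (-ℓ) i := by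
    rw [poch_succ_left]
    push_cast
    rw [neg_add, neg_add_cancel_right]
  have hi : (i + 1 : ℂ) ≠ 0 := Nat.cast_add_one_ne_zero i
  have hfact : (i.factorial : ℂ) ≠ 0 := Nat.cast_ne_zero.mpr i.factorial_ne_zero
  simp only [sqDividedDiffCoeff, hleft, hnode, poch_succ (-ℓ : ℂ), Nat.factorial_succ]
  rw [poch_succ_left, poch_succ] at ha
  rw [poch_succ_left _ (ℓ + 1), poch_succ _ ℓ, poch_succ_left _ ℓ]
  push_cast at ha ⊢
  generalize poch (2 * a + (i + 1) + 1) ℓ = p at *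
  simp only [ne_eq, mul_eq_zero, not_or] at ha
  obtain ⟨hfirst, hmid, hlast⟩ := ha
  field_simp
  ring

theorem sqDividedDiff_zero (φ : ℂ → ℂ) {a : ℂ} (ha : a ≠ 0) : sqDividedDiff φ 0 a = φ a := by
  simp only [sqDividedDiff, sqDividedDiffCoeff, zero_add, Finset.sum_range_one, poch,
    Finset.prod_range_zero, Finset.prod_range_one, Nat.factorial_zero, Nat.cast_zero, Nat.cast_one,
    add_zero, one_mul]
  field_simp

theorem sqDividedDiff_succ (φ : ℂ → ℂ) {ℓ : ℕ} {a : ℂ} (ha : poch (2 * a) (2 * ℓ + 3) ≠ 0) :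
    (2 * a + (ℓ + 1)) * sqDividedDiff φ (ℓ + 1) a =
      sqDividedDiff φ ℓ a - sqDividedDiff φ ℓ (a + 1) := by
  have hextend : sqDividedDiff φ ℓ a = ∑ i ∈ Finset.range (ℓ + 2),
      sqDividedDiffCoeff ℓ a i * (2 * (a + i) * φ (a + i)) := by
    rw [Finset.sum_range_succ, sqDividedDiffCoeff_eq_zero a ℓ.lt_succ_self, zero_mul, add_zero,
      sqDividedDiff]
  have hzero : 2 * a + (ℓ + 1) ≠ 0 := by
    exact_mod_cast poch_ne_zero_iff.mp ha (ℓ + 1) (by omega)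
  rw [hextend, sqDividedDiff, sqDividedDiff, Finset.sum_range_succ',
    Finset.sum_range_succ' _ (ℓ + 1), mul_add, add_sub_right_comm, Finset.mul_sum,
    ← Finset.sum_sub_distrib, ← mul_assoc, sqDividedDiffCoeff_succ_zero hzero]
  congr 1
  refine Finset.sum_congr rfl fun i hi => ?_
  have hi' := Finset.mem_range.mp hi
  rw [← mul_assoc, sqDividedDiffCoeff_succ_succ (poch_add_natCast_ne_zero ha (by omega)),
    Nat.cast_add_one, add_right_comm a 1, add_assoc a, sub_mul]

/-- Closed form of `sqDividedDiff φ ℓ a` for `φ y = y * ((1 + y)_k * (1 - y)_k)`. -/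
noncomputable def pochDividedDiff (k ℓ : ℕ) (a : ℂ) : ℂ :=
  -4 ^ ℓ * poch (-1 / 2 - k) ℓ * (poch (1 + a) k * poch (-ℓ - a) (k + 1)) /
    poch (2 * a + 1) (2 * ℓ)

theorem pochDividedDiff_zero (k : ℕ) (a : ℂ) :
    pochDividedDiff k 0 a = a * (poch (1 + a) k * poch (1 - a) k) := by
  have hneg : poch (-a) (k + 1) = -a * poch (1 - a) k := by rw [poch_succ_left, neg_add_eq_sub]
  simp only [pochDividedDiff, poch_zero, pow_zero, mul_zero, Nat.cast_zero, neg_zero, zero_sub,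
    hneg]
  ring

theorem pochDividedDiff_eq_div_poch_add_two (k : ℕ) {ℓ : ℕ} {a : ℂ}
    (ha : poch (2 * a + 1) (2 * ℓ + 2) ≠ 0) :
    pochDividedDiff k ℓ a = 2 * 4 ^ ℓ * poch (-1 / 2 - k) ℓ *
      (poch (1 + a) k * poch (-(ℓ + 1) - a) (k + 1)) * ((2 * a + 1 + 2 * ℓ) * (k - ℓ - a)) /
        poch (2 * a + 1) (2 * ℓ + 2) := by
  have hlast : poch (2 * a + 1) (2 * ℓ + 2) =
      poch (2 * a + 1) (2 * ℓ) * ((2 * a + 1 + 2 * ℓ) * (2 * a + 2 + 2 * ℓ)) := by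
    rw [poch_succ, poch_succ]
    push_cast
    ring
  have hshift := mul_poch_add_one (-(ℓ + 1) - a) (k + 1)
  rw [show -(ℓ + 1) - a + 1 = -ℓ - a by ring] at hshift
  push_cast at hshift
  rw [hlast] at ha ⊢
  rw [pochDividedDiff, div_eq_div_iff (left_ne_zero_of_mul ha) ha]
  linear_combination 2 * 4 ^ ℓ * poch (-1 / 2 - k) ℓ * poch (1 + a) k *
    poch (2 * a + 1) (2 * ℓ) * (2 * a + 1 + 2 * ℓ) * hshift

theorem pochDividedDiff_add_one_eq_div_poch_add_two (k : ℕ) {ℓ : ℕ} {a : ℂ}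
    (ha : poch (2 * a + 1) (2 * ℓ + 2) ≠ 0) :
    pochDividedDiff k ℓ (a + 1) = -2 * 4 ^ ℓ * poch (-1 / 2 - k) ℓ *
      (poch (1 + a) k * poch (-(ℓ + 1) - a) (k + 1)) * ((2 * a + 1) * (1 + a + k)) /
        poch (2 * a + 1) (2 * ℓ + 2) := by
  have hfirst : poch (2 * a + 1) (2 * ℓ + 2) =
      poch (2 * (a + 1) + 1) (2 * ℓ) * ((2 * a + 1) * (2 * a + 2)) := by
    rw [poch_succ_left, poch_succ_left, show 2 * a + 1 + 1 + 1 = 2 * (a + 1) + 1 by ring]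
    ring
  have hshift := mul_poch_add_one (1 + a) k
  rw [hfirst] at ha ⊢
  rw [pochDividedDiff, div_eq_div_iff (left_ne_zero_of_mul ha) ha,
    show (-ℓ - (a + 1) : ℂ) = -(ℓ + 1) - a by ring, ← add_assoc 1 a]
  linear_combination -2 * 4 ^ ℓ * poch (-1 / 2 - k) ℓ * poch (-(ℓ + 1) - a) (k + 1) *
    poch (2 * (a + 1) + 1) (2 * ℓ) * (2 * a + 1) * hshift

theorem pochDividedDiff_succ (k : ℕ) {ℓ : ℕ} {a : ℂ} (ha : poch (2 * a + 1) (2 * ℓ + 2) ≠ 0) :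
    (2 * a + (ℓ + 1)) * pochDividedDiff k (ℓ + 1) a =
      pochDividedDiff k ℓ a - pochDividedDiff k ℓ (a + 1) := by
  rw [pochDividedDiff_eq_div_poch_add_two k ha, pochDividedDiff_add_one_eq_div_poch_add_two k ha,
    pochDividedDiff, poch_succ _ ℓ, mul_add_one 2 ℓ]
  push_cast
  ring

theorem sqDividedDiff_mul_poch (k : ℕ) {ℓ : ℕ} {a : ℂ} (ha : poch (2 * a) (2 * ℓ + 1) ≠ 0) :
    sqDividedDiff (fun y => y * (poch (1 + y) k * poch (1 - y) k)) ℓ a =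
      pochDividedDiff k ℓ a := by
  induction ℓ generalizing a with
  | zero =>
    have ha0 : a ≠ 0 := by simpa [poch] using ha
    rw [sqDividedDiff_zero _ ha0, pochDividedDiff_zero]
  | succ ℓ ih =>
    have hnode : 2 * a + (ℓ + 1) ≠ 0 := by
      exact_mod_cast poch_ne_zero_iff.mp ha (ℓ + 1) (by omega)
    have hright : poch (2 * (a + 1)) (2 * ℓ + 1) ≠ 0 := by
      rw [mul_add_one]
      exact_mod_cast poch_add_natCast_ne_zero (i := 2) ha (by omega)
    have htail : poch (2 * a + 1) (2 * ℓ + 2) ≠ 0 :=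
      right_ne_zero_of_mul (poch_succ_left _ _ ▸ ha)
    rw [← mul_right_inj' hnode, sqDividedDiff_succ _ ha, pochDividedDiff_succ k htail, ih hright,
      ih (by simpa using poch_add_natCast_ne_zero (i := 0) ha (by omega))]

theorem sum_wellPoised_eq_sqDividedDiff (φ : ℂ → ℂ) {ℓ : ℕ} {a : ℂ}
    (ha : poch (2 * a) (2 * ℓ + 1) ≠ 0) :
    ∑ i ∈ Finset.range (ℓ + 1), ((a + i) / a) ^ 2 * (poch (-(ℓ : ℂ)) i * poch (2 * a) i) /
        (i.factorial * poch (2 * a + 1 + ℓ) i) * φ (a + i) =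
      poch (2 * a + 1) ℓ / a * sqDividedDiff (fun y => y * φ y) ℓ a := by
  rw [sqDividedDiff, Finset.mul_sum]
  refine Finset.sum_congr rfl fun i hi => ?_
  have hi' := Finset.mem_range.mp hi
  have ha0 : 2 * a ≠ 0 := left_ne_zero_of_mul (poch_succ_left _ _ ▸ ha)
  have hden : poch (2 * a + i) (ℓ + 1) ≠ 0 := poch_add_natCast_ne_zero ha (by omega)
  have hden' : poch (2 * a + 1 + ℓ) i ≠ 0 := by
    rw [add_assoc, add_comm 1]
    exact_mod_cast poch_add_natCast_ne_zero (i := ℓ + 1) ha (by omega)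
  have hsplit : poch (2 * a) i * poch (2 * a + i) (ℓ + 1) =
      2 * a * (poch (2 * a + 1) ℓ * poch (2 * a + 1 + ℓ) i) := by
    rw [← poch_add, ← poch_add, ← poch_succ_left, add_comm i, add_right_comm]
  have hweight : poch (2 * a) i / poch (2 * a + 1 + ℓ) i =
      2 * a * poch (2 * a + 1) ℓ / poch (2 * a + i) (ℓ + 1) := by
    rw [div_eq_div_iff hden' hden, hsplit, ← mul_assoc (2 * a)]
  calc ((a + i) / a) ^ 2 * (poch (-(ℓ : ℂ)) i * poch (2 * a) i) /
        (i.factorial * poch (2 * a + 1 + ℓ) i) * φ (a + i)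
      = ((a + i) / a) ^ 2 * poch (-(ℓ : ℂ)) i / i.factorial *
          (poch (2 * a) i / poch (2 * a + 1 + ℓ) i) * φ (a + i) := by ring
    _ = poch (2 * a + 1) ℓ / a *
          (sqDividedDiffCoeff ℓ a i * (2 * (a + i) * ((a + i) * φ (a + i)))) := by
      rw [hweight, sqDividedDiffCoeff]
      have : a ≠ 0 := right_ne_zero_of_mul ha0
      field_simp

theorem poch_mul_poch_div_eq_pochDividedDiff (k : ℕ) {ℓ : ℕ} {a : ℂ}
    (ha : poch (2 * a) (2 * ℓ + 1) ≠ 0) :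
    poch (1 + a) k * poch (1 - ℓ - a) k / poch (3 / 2 - ℓ) k =
      (poch a ℓ * poch (a + 1 / 2) ℓ) / (a * (poch (-1 / 2) ℓ * poch (3 / 2) k)) *
        pochDividedDiff k ℓ a := by
  have hhead : 2 * a ≠ 0 := left_ne_zero_of_mul (poch_succ_left _ _ ▸ ha)
  have htail : poch (2 * a + 1) (2 * ℓ) ≠ 0 := right_ne_zero_of_mul (poch_succ_left _ _ ▸ ha)
  have hhalf : poch (-1 / 2) ℓ ≠ 0 :=
    poch_ne_zero_of_two_mul_eq_odd (m := -1) (by decide) (by norm_num) ℓ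
  have hden : poch (3 / 2 - ℓ) k ≠ 0 :=
    poch_ne_zero_of_two_mul_eq_odd (m := 3 - 2 * ℓ) ⟨1 - ℓ, by ring⟩ (by push_cast; ring) k
  have hhalves := poch_one_sub_mul_poch (3 / 2) ℓ k
  rw [show (1 - 3 / 2 : ℂ) = -1 / 2 by norm_num] at hhalves
  have hdouble : 2 * a * poch (2 * a + 1) (2 * ℓ) =
      4 ^ ℓ * (poch a ℓ * poch (a + 1 / 2) ℓ) * (2 * (a + ℓ)) := by
    rw [mul_poch_add_one, poch_two_mul]
    push_cast
    ring
  have hneg : poch (-ℓ - a) (k + 1) = -(a + ℓ) * poch (1 - ℓ - a) k := by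
    rw [poch_succ_left, show -ℓ - a + 1 = 1 - ℓ - a by ring]
    ring
  rw [pochDividedDiff, hneg, div_mul_div_comm, div_eq_div_iff hden (mul_ne_zero
    (mul_ne_zero (right_ne_zero_of_mul hhead)
      (mul_ne_zero hhalf (poch_three_halves_ne_zero k))) htail)]
  linear_combination poch (1 + a) k * poch (1 - ℓ - a) k *
    (a * poch (2 * a + 1) (2 * ℓ) * hhalves +
      poch (-1 / 2 - k) ℓ * poch (3 / 2 - ℓ) k / 2 * hdouble)

theorem poch_mul_poch_div_eq_sum (k : ℕ) {ℓ : ℕ} {a : ℂ} (ha : poch (2 * a) (2 * ℓ + 1) ≠ 0) :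
    poch (1 + a) k * poch (1 - ℓ - a) k / poch (3 / 2 - ℓ) k =
      (poch a ℓ * poch (a + 1 / 2) ℓ) / (poch (2 * a + 1) ℓ * poch (-1 / 2) ℓ) *
        ∑ i ∈ Finset.range (ℓ + 1), ((a + i) / a) ^ 2 * (poch (-(ℓ : ℂ)) i * poch (2 * a) i) /
          (i.factorial * poch (2 * a + 1 + ℓ) i) *
            (poch (1 + (a + i)) k * poch (1 - (a + i)) k / poch (3 / 2) k) := by
  have hmid : poch (2 * a + 1) ℓ ≠ 0 := by
    exact_mod_cast poch_add_natCast_ne_zero (i := 1) ha (by omega)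
  simp only [← mul_div_assoc, ← Finset.sum_div]
  rw [sum_wellPoised_eq_sqDividedDiff (fun y => poch (1 + y) k * poch (1 - y) k) ha,
    sqDividedDiff_mul_poch k ha, poch_mul_poch_div_eq_pochDividedDiff k ha]
  generalize poch (2 * a + 1) ℓ = p at *
  field_simp

theorem sum_mul_poch_div_eq_sum_sum (s : Finset ℕ) (c : ℕ → ℂ) {ℓ : ℕ} {a : ℂ}
    (ha : poch (2 * a) (2 * ℓ + 1) ≠ 0) :
    ∑ k ∈ s, c k * (poch (1 + a) k * poch (1 - ℓ - a) k / poch (3 / 2 - ℓ) k) =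
      (poch a ℓ * poch (a + 1 / 2) ℓ) / (poch (2 * a + 1) ℓ * poch (-1 / 2) ℓ) *
        ∑ i ∈ Finset.range (ℓ + 1), ((a + i) / a) ^ 2 * (poch (-(ℓ : ℂ)) i * poch (2 * a) i) /
          (i.factorial * poch (2 * a + 1 + ℓ) i) *
            ∑ k ∈ s, c k * (poch (1 + (a + i)) k * poch (1 - (a + i)) k / poch (3 / 2) k) := by
  simp only [poch_mul_poch_div_eq_sum _ ha, Finset.mul_sum]
  rw [Finset.sum_comm]
  refine Finset.sum_congr rfl fun i _ => Finset.sum_congr rfl fun k _ => ?_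
  rw [mul_left_comm, mul_left_comm (c k)]

theorem gosper_second_variant_extension (ℓ n : ℕ) (x : ℂ)
    (h3x : 3*x - 1 ≠ 0) (h6xℓ : poch (6*x - 1) ℓ ≠ 0) (hhalf : poch (-1/2) ℓ ≠ 0)
    (hdeni : ∀ i ≤ ℓ, poch (6*x + ℓ - 1) i ≠ 0)
    (hden : ∀ k ≤ n, poch (3/2 - ℓ) k ≠ 0 ∧ poch (-1 - 3*n : ℂ) k ≠ 0)
    (h23 : poch (2/3) n ≠ 0) (h43 : poch (4/3) n ≠ 0) :
    ∑ k ∈ Finset.range (n+1),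
      (poch (3*x) k * poch (2 - ℓ - 3*x) k * poch (-(n : ℂ)) k) /
        ((Nat.factorial k : ℂ) * poch (3/2 - ℓ) k * poch (-1 - 3*n : ℂ) k) * (3/4 : ℂ)^k
      = (poch (3*x - 1) ℓ * poch (3*x - 1/2) ℓ) / (poch (6*x - 1) ℓ * poch (-1/2) ℓ) *
        ∑ i ∈ Finset.range (ℓ+1),
          ((3*x + i - 1) / (3*x - 1))^2 *
            (poch (-(ℓ : ℂ)) i * poch (6*x - 2) i) /
            ((Nat.factorial i : ℂ) * poch (6*x + ℓ - 1) i) *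
            ((poch ((2 + i)/3 + x) n * poch ((4 - i)/3 - x) n) /
              (poch (2/3) n * poch (4/3) n)) := by
  have hfirst : 2 * (3 * x - 1) + 1 = 6 * x - 1 := by ring
  have hlast : 6 * x - 1 + ℓ = 6 * x + ℓ - 1 := by ring
  have ha : poch (2 * (3 * x - 1)) (2 * ℓ + 1) ≠ 0 := by
    rw [poch_succ_left, two_mul ℓ, poch_add, hfirst, hlast]
    exact mul_ne_zero (mul_ne_zero two_ne_zero h3x) (mul_ne_zero h6xℓ (hdeni ℓ le_rfl))
  have hinner (i : ℕ) : poch ((2 + i) / 3 + x) n * poch ((4 - i) / 3 - x) n /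
      (poch (2 / 3) n * poch (4 / 3) n) =
        ∑ k ∈ Finset.range (n + 1), gosperTerm (3 * x - 1 + i) (-n) (-1 - 3 * n) k := by
    rw [sum_gosperTerm, show 1 + (3 * x - 1 + i) / 3 = (2 + i) / 3 + x by ring,
      show 1 - (3 * x - 1 + i) / 3 = (4 - i) / 3 - x by ring]
  have hexpand := sum_mul_poch_div_eq_sum_sum (Finset.range (n + 1))
    (fun k => poch (-n) k / (k.factorial * poch (-1 - 3 * n) k) * (3 / 4) ^ k) ha
  rw [hfirst, hlast, show 2 * (3 * x - 1) = 6 * x - 2 by ring,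
    show 3 * x - 1 + 1 / 2 = 3 * x - 1 / 2 by ring, show 1 + (3 * x - 1) = 3 * x by ring,
    show 1 - ℓ - (3 * x - 1) = 2 - ℓ - 3 * x by ring] at hexpand
  simp only [hinner, add_sub_right_comm (3 * x) _ 1, gosperTerm]
  exact (Finset.sum_congr rfl fun k _ => by ring).trans hexpand
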